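/- Let I_1,…,I_t ⊂ S = K[x_1,…,x_n] be nonzero proper monomial ideals with pairwise disjoint supports and equal initial degrees α(I_1) = α(I_2) = ⋯ = α(I_t) = a. Suppose that for each j = 1,…,t there exists k_j such that v(I_j^k) = a·k − 1 for all k ≥ k_j. Then there exists k_0 such that for all k ≥ k_0, v((I_1 + ⋯ + I_t)^k) = a·k + ((t−1)·a − t). -/

import Mathlib

open MvPolynomial

noncomputable section

/-- The set of associated primes `Ass(L)` of the quotient by an ideal `L`. -/
def assOf {A : Type} [CommRing A] (L : Ideal A) : Set (Ideal A) :=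
  associatedPrimes A (A ⧸ L)

/-- `𝔄` is the stable value `Ass^∞(L)` of `Ass(L^k)` for all large `k`. -/
def IsStableAssValue {A : Type} [CommRing A] (L : Ideal A) (𝔄 : Set (Ideal A)) : Prop :=
  ∃ N : ℕ, ∀ k : ℕ, N ≤ k → assOf (L ^ k) = 𝔄

/-- `Ass^*(L) = ⋃_{k ≥ 1} Ass(L^k)`. -/
def assStar {A : Type} [CommRing A] (L : Ideal A) : Set (Ideal A) :=
  {p | ∃ k : ℕ, 1 ≤ k ∧ p ∈ assOf (L ^ k)}

/-- The local v-number `v_p(L)`: the least degree of a homogeneous `f` with `(L : f) = p`. -/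
def vnum {σ K : Type} [Field K] (L p : Ideal (MvPolynomial σ K)) : ℕ :=
  sInf {d : ℕ | ∃ f : MvPolynomial σ K, f.IsHomogeneous d ∧ L.colon (Ideal.span {f}) = p}

/-- The v-number `v(L) = min_{p ∈ Ass(L)} v_p(L)`. -/
def vnumber {σ K : Type} [Field K] (L : Ideal (MvPolynomial σ K)) : ℕ :=
  sInf {d : ℕ | ∃ p ∈ assOf L, ∃ f : MvPolynomial σ K,
    f.IsHomogeneous d ∧ L.colon (Ideal.span {f}) = p}

/-- The initial degree `α(L)`: the least `d` such that `L` contains a nonzero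
homogeneous element of degree `d`. -/
def alphaDeg {σ K : Type} [Field K] (L : Ideal (MvPolynomial σ K)) : ℕ :=
  sInf {d : ℕ | ∃ f ∈ L, f ≠ 0 ∧ MvPolynomial.IsHomogeneous f d}

/-- A graded (homogeneous) ideal: one containing all homogeneous components
of each of its elements. -/
def IsGradedIdeal {σ K : Type} [Field K] (I : Ideal (MvPolynomial σ K)) : Prop :=
  ∀ f ∈ I, ∀ d : ℕ, homogeneousComponent d f ∈ I

/-- A monomial ideal: an ideal generated by monomials. -/
def IsMonomialIdeal {σ K : Type} [Field K] (I : Ideal (MvPolynomial σ K)) : Prop :=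
  ∃ G : Set (σ →₀ ℕ), I = Ideal.span ((fun a => (monomial a (1 : K))) '' G)

/-- Exponent vectors of the minimal monomial generators of a monomial ideal. -/
def minimalMonGens {σ K : Type} [Field K] (I : Ideal (MvPolynomial σ K)) : Set (σ →₀ ℕ) :=
  {a | (monomial a (1 : K)) ∈ I ∧
    ∀ b : σ →₀ ℕ, (monomial b (1 : K)) ∈ I → b ≤ a → b = a}

/-- The support of a monomial ideal: the union of the supports of its
minimal monomial generators. -/
def suppIdeal {σ K : Type} [Field K] (I : Ideal (MvPolynomial σ K)) : Set σ :=
  ⋃ a ∈ minimalMonGens I, (a.support : Set σ)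

/-!
For a monomial ideal `I` let `ord_I(u)` be the largest `k` with `x^u ∈ I^k`. It is additive over
sums of ideals with disjoint supports, it grows by at most one when `u` is multiplied by a variable,
and `a · ord_I(u)` is at most the degree of `u` in the variables of `I`, where `a = α(I)`.

Let `L = I_1 + ⋯ + I_t`. If `(L^k : x^u)` is prime, then it contains a variable from the support of
each `I_j`, because it contains `I_j^k`. Hence `ord_L(u) = k - 1`, and multiplication by the
variable chosen for `I_j` must raise `ord_{I_j}`, so the degree of `u` in the variables of `I_j` is
at least `a · (ord_{I_j}(u) + 1) - 1`. Summation over `j` gives `deg u ≥ a · (k - 1 + t) - t`.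

Equality occurs: if `∑ κ_j = k - 1` and `x^{u_j}` attains `v(I_j^{κ_j + 1}) = a · (κ_j + 1) - 1`,
then for the product `x^u` over `j` of the parts of `x^{u_j}` in the variables of `I_j` the ideal
`(L^k : x^u)` is prime.
-/

open scoped Pointwise

section Multisets

theorem mem_nsmul_iff_exists_multiset {M : Type*} [AddCommMonoid M] {G : Set M} {k : ℕ} {u : M} :
    u ∈ k • G ↔ ∃ s : Multiset M, (∀ g ∈ s, g ∈ G) ∧ s.card = k ∧ s.sum = u := by
  induction k generalizing u with
  | zero => simp [eq_comm]
  | succ k ih =>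
    simp only [succ_nsmul', Set.mem_add, ih]
    constructor
    · rintro ⟨g, hg, _, ⟨s, hs, rfl, rfl⟩, rfl⟩
      exact ⟨g ::ₘ s, by simpa [hg] using hs, by simp, by simp⟩
    · rintro ⟨s, hs, hcard, rfl⟩
      obtain ⟨g, t, rfl, rfl⟩ := Multiset.card_eq_succ_iff.1 hcard
      rw [Multiset.forall_mem_cons] at hs
      exact ⟨g, hs.1, _, ⟨t, hs.2, rfl, rfl⟩, by simp⟩

theorem exists_sum_eq_of_forall_mem_iUnion {ι M : Type*} [Fintype ι] {G : ι → Set M}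
    {s : Multiset M} (hs : ∀ g ∈ s, g ∈ ⋃ j, G j) :
    ∃ p : ι → Multiset M, (∀ j, ∀ g ∈ p j, g ∈ G j) ∧ ∑ j, p j = s := by
  classical
  induction s using Multiset.induction with
  | empty => exact ⟨0, by simp⟩
  | cons g s ih =>
    rw [Multiset.forall_mem_cons] at hs
    obtain ⟨i, hi⟩ := Set.mem_iUnion.1 hs.1
    obtain ⟨p, hp, rfl⟩ := ih hs.2
    refine ⟨p + Pi.single i {g}, fun j h hh => ?_, ?_⟩
    · rcases Multiset.mem_add.1 hh with hh | hh
      · exact hp j h hh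
      · rcases eq_or_ne j i with rfl | hji
        · simp_all
        · simp [hji] at hh
    · rw [← Multiset.singleton_add, add_comm]
      simp [Finset.sum_add_distrib]

end Multisets

section Finsupp

variable {σ ι : Type*}

theorem card_mul_le_degree_sum {s : Multiset (σ →₀ ℕ)} {a : ℕ} (ha : ∀ g ∈ s, a ≤ g.degree) :
    s.card * a ≤ s.sum.degree := by
  rw [map_multiset_sum]
  simpa using Multiset.card_nsmul_le_sum (s := s.map Finsupp.degree) (a := a) (by simpa using ha)

theorem sum_apply_eq_of_pairwise_disjoint [Fintype ι] {V : ι → Set σ}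
    (hV : Pairwise fun i j => Disjoint (V i) (V j)) {f : ι → σ →₀ ℕ}
    (hf : ∀ j, ((f j).support : Set σ) ⊆ V j) {j : ι} {x : σ} (hx : x ∈ V j) :
    (∑ i, f i) x = f j x := by
  rw [Finset.sum_apply']
  refine Finset.sum_eq_single j (fun i _ hij => ?_) (by simp)
  by_contra h
  exact Set.disjoint_left.1 (hV hij) (hf i (by simpa using h)) hx

theorem sum_le_of_pairwise_disjoint [Fintype ι] {V : ι → Set σ}
    (hV : Pairwise fun i j => Disjoint (V i) (V j)) {f : ι → σ →₀ ℕ} {u : σ →₀ ℕ}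
    (hf : ∀ j, ((f j).support : Set σ) ⊆ V j) (hfu : ∀ j, f j ≤ u) : ∑ j, f j ≤ u := by
  intro x
  by_cases hx : ∃ j, x ∈ V j
  · obtain ⟨j, hj⟩ := hx
    exact (sum_apply_eq_of_pairwise_disjoint hV hf hj).trans_le (hfu j x)
  · have hzero : ∀ j, f j x = 0 := fun j => by
      by_contra h
      exact hx ⟨j, hf j (by simpa using h)⟩
    simp [Finset.sum_apply', hzero]

end Finsupp

section PackingNumber

variable {σ ι : Type*} {G : Set (σ →₀ ℕ)} {u v : σ →₀ ℕ} {k : ℕ}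

/-- The order of `x^u` with respect to the ideal `I` generated by the monomials `x^g` with `g ∈ G`:
the largest `k` with `x^u ∈ I^k`, that is, such that some sum of `k` elements of `G` is at most `u`.
If `0 ∈ G` there is no largest such `k`, and the value is the junk value `0`. -/
def packingNumber (G : Set (σ →₀ ℕ)) (u : σ →₀ ℕ) : ℕ :=
  sSup {k : ℕ | ∃ s ∈ k • G, s ≤ u}

/-- The support of the ideal generated by the monomials `x^g` with `g ∈ G`: the variables dividing
some `x^g`. For `G = minimalMonGens I` this is `suppIdeal I` by definition. -/
def genSupport (G : Set (σ →₀ ℕ)) : Set σ :=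
  ⋃ g ∈ G, (g.support : Set σ)

theorem support_subset_genSupport {g : σ →₀ ℕ} (hg : g ∈ G) :
    (g.support : Set σ) ⊆ genSupport G :=
  Set.subset_biUnion_of_mem (u := fun g : σ →₀ ℕ => (g.support : Set σ)) hg

theorem support_sum_subset_genSupport {s : Multiset (σ →₀ ℕ)} (hs : ∀ g ∈ s, g ∈ G) :
    (s.sum.support : Set σ) ⊆ genSupport G := by
  induction s using Multiset.induction with
  | empty => simp
  | cons g s ih =>
    classical
    rw [Multiset.forall_mem_cons] at hs
    rw [Multiset.sum_cons]
    refine (Finset.coe_subset.2 Finsupp.support_add).trans ?_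
    rw [Finset.coe_union]
    exact Set.union_subset (support_subset_genSupport hs.1) (ih hs.2)

/-- The part of an exponent vector `u` carried by the variables in `genSupport G`. It cuts an
exponent vector into independent blocks, one for each of several ideals with disjoint supports. -/
def genPart (G : Set (σ →₀ ℕ)) (u : σ →₀ ℕ) : σ →₀ ℕ :=
  open scoped Classical in u.filter (· ∈ genSupport G)

theorem genPart_apply_of_mem {x : σ} (hx : x ∈ genSupport G) (u : σ →₀ ℕ) :
    genPart G u x = u x := by
  classical exact Finsupp.filter_apply_pos (· ∈ genSupport G) u hx

theorem support_genPart_subset (G : Set (σ →₀ ℕ)) (u : σ →₀ ℕ) :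
    ((genPart G u).support : Set σ) ⊆ genSupport G := by
  classical exact fun x hx => (Finset.mem_filter.1 (Finset.mem_coe.1 hx)).2

theorem genPart_add (G : Set (σ →₀ ℕ)) (u v : σ →₀ ℕ) :
    genPart G (u + v) = genPart G u + genPart G v := by
  classical exact Finsupp.filter_add

theorem genPart_le (G : Set (σ →₀ ℕ)) (u : σ →₀ ℕ) : genPart G u ≤ u := by
  intro x
  by_cases hx : x ∈ genSupport G
  · exact (genPart_apply_of_mem hx u).le
  · have hzero : genPart G u x = 0 := by
      by_contra h
      exact hx (support_genPart_subset G u (by simpa using h))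
    simp [hzero]

theorem bddAbove_packing (h0 : 0 ∉ G) (u : σ →₀ ℕ) :
    BddAbove {k : ℕ | ∃ s ∈ k • G, s ≤ u} := by
  refine ⟨u.degree, ?_⟩
  rintro _ ⟨_, hs, hsu⟩
  obtain ⟨s, hsG, rfl, rfl⟩ := mem_nsmul_iff_exists_multiset.1 hs
  have hpos : ∀ g ∈ s, 1 ≤ g.degree := fun g hg => by
    rw [Nat.one_le_iff_ne_zero, Ne, Finsupp.degree_eq_zero_iff]
    rintro rfl
    exact h0 (hsG _ hg)
  simpa using (card_mul_le_degree_sum hpos).trans (Finsupp.degree_mono hsu)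

theorem le_packingNumber_iff (h0 : 0 ∉ G) : k ≤ packingNumber G u ↔ ∃ s ∈ k • G, s ≤ u := by
  refine ⟨fun hk => ?_, fun h => le_csSup (bddAbove_packing h0 u) h⟩
  have hne : {k : ℕ | ∃ s ∈ k • G, s ≤ u}.Nonempty :=
    ⟨0, 0, by simp only [zero_nsmul, Set.mem_zero], zero_le⟩
  obtain ⟨m, hm⟩ := Nat.exists_eq_add_of_le hk
  obtain ⟨_, hs, hsu⟩ := Nat.sSup_mem hne (bddAbove_packing h0 u)
  rw [← packingNumber, hm, add_nsmul] at hs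
  obtain ⟨s, hs, t, -, rfl⟩ := hs
  exact ⟨s, hs, le_self_add.trans hsu⟩

theorem card_le_packingNumber (h0 : 0 ∉ G) {s : Multiset (σ →₀ ℕ)} (hs : ∀ g ∈ s, g ∈ G)
    (hsu : s.sum ≤ u) : s.card ≤ packingNumber G u :=
  (le_packingNumber_iff h0).2 ⟨_, mem_nsmul_iff_exists_multiset.2 ⟨s, hs, rfl, rfl⟩, hsu⟩

theorem exists_card_eq_packingNumber (h0 : 0 ∉ G) (u : σ →₀ ℕ) :
    ∃ s : Multiset (σ →₀ ℕ), (∀ g ∈ s, g ∈ G) ∧ s.card = packingNumber G u ∧ s.sum ≤ u := by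
  obtain ⟨_, hs, hsu⟩ := (le_packingNumber_iff h0).1 (le_refl (packingNumber G u))
  obtain ⟨s, hsG, hcard, rfl⟩ := mem_nsmul_iff_exists_multiset.1 hs
  exact ⟨s, hsG, hcard, hsu⟩

theorem packingNumber_le_of_le_on (h0 : 0 ∉ G) (h : ∀ x ∈ genSupport G, u x ≤ v x) :
    packingNumber G u ≤ packingNumber G v := by
  obtain ⟨s, hs, hcard, hsu⟩ := exists_card_eq_packingNumber h0 u
  rw [← hcard]
  refine card_le_packingNumber h0 hs fun x => ?_
  by_cases hx : x ∈ genSupport G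
  · exact (hsu x).trans (h x hx)
  · have hzero : s.sum x = 0 := by
      by_contra hne
      exact hx (support_sum_subset_genSupport hs (by simpa using hne))
    simp [hzero]

theorem packingNumber_mono (h0 : 0 ∉ G) : Monotone (packingNumber G) :=
  fun _ _ huv => packingNumber_le_of_le_on h0 fun x _ => huv x

theorem packingNumber_congr (h0 : 0 ∉ G) (h : Set.EqOn u v (genSupport G)) :
    packingNumber G u = packingNumber G v :=
  (packingNumber_le_of_le_on h0 fun _ hx => (h hx).le).antisymm
    (packingNumber_le_of_le_on h0 fun _ hx => (h hx).ge)

theorem packingNumber_add_single_le (h0 : 0 ∉ G) (u : σ →₀ ℕ) (x : σ) :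
    packingNumber G (u + Finsupp.single x 1) ≤ packingNumber G u + 1 := by
  classical
  obtain ⟨s, hs, hcard, hsu⟩ := exists_card_eq_packingNumber h0 (u + Finsupp.single x 1)
  rw [← hcard]
  have hne : ∀ y, y ≠ x → s.sum y ≤ u y := fun y hy => by simpa [hy.symm] using hsu y
  have hx : s.sum x ≤ u x + 1 := by simpa using hsu x
  by_cases hgx : ∃ g ∈ s, g x ≠ 0
  · obtain ⟨g, hg, hgx⟩ := hgx
    have hsum : ∀ y, g y + (s.erase g).sum y = s.sum y := fun y => by
      rw [← Finsupp.add_apply, Multiset.sum_erase hg]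
    have hle : (s.erase g).sum ≤ u := fun y => by
      have := hsum y
      rcases eq_or_ne y x with rfl | hy
      · omega
      · have := hne y hy
        omega
    rw [← Multiset.card_erase_add_one hg]
    gcongr
    exact card_le_packingNumber h0 (fun h hh => hs h (Multiset.mem_of_mem_erase hh)) hle
  · push Not at hgx
    have hsx : s.sum x = 0 := by
      rw [← Finsupp.applyAddHom_apply, map_multiset_sum]
      exact Multiset.sum_eq_zero (by simpa using hgx)
    refine (card_le_packingNumber h0 hs fun y => ?_).trans (Nat.le_succ _)
    rcases eq_or_ne y x with rfl | hy
    · simp [hsx]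
    · exact hne y hy

theorem mul_packingNumber_le_degree_genPart (h0 : 0 ∉ G) {a : ℕ} (ha : ∀ g ∈ G, a ≤ g.degree)
    (u : σ →₀ ℕ) : a * packingNumber G u ≤ (genPart G u).degree := by
  have hpart : packingNumber G u = packingNumber G (genPart G u) :=
    packingNumber_congr h0 fun x hx => (genPart_apply_of_mem hx u).symm
  obtain ⟨s, hs, hcard, hsu⟩ := exists_card_eq_packingNumber h0 (genPart G u)
  rw [hpart, ← hcard, mul_comm]
  exact (card_mul_le_degree_sum fun g hg => ha g (hs g hg)).trans (Finsupp.degree_mono hsu)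

theorem packingNumber_iUnion [Fintype ι] {G : ι → Set (σ →₀ ℕ)} (h0 : ∀ j, 0 ∉ G j)
    (hdisj : Pairwise fun i j => Disjoint (genSupport (G i)) (genSupport (G j))) (u : σ →₀ ℕ) :
    packingNumber (⋃ j, G j) u = ∑ j, packingNumber (G j) u := by
  have h0' : 0 ∉ ⋃ j, G j := by simpa using h0
  apply le_antisymm
  · obtain ⟨s, hs, hcard, hsu⟩ := exists_card_eq_packingNumber h0' u
    obtain ⟨p, hp, rfl⟩ := exists_sum_eq_of_forall_mem_iUnion hs
    rw [← hcard, Multiset.card_sum]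
    rw [Multiset.sum_sum] at hsu
    exact Finset.sum_le_sum fun j _ => card_le_packingNumber (h0 j) (hp j)
      ((Finset.single_le_sum_of_canonicallyOrdered (Finset.mem_univ j)).trans hsu)
  · choose p hp hcard hpu using fun j => exists_card_eq_packingNumber (h0 j) u
    simp only [← hcard]
    rw [← Multiset.card_sum]
    refine card_le_packingNumber h0' (fun g hg => ?_) ?_
    · obtain ⟨j, -, hg⟩ := Multiset.mem_sum.1 hg
      exact Set.mem_iUnion.2 ⟨j, hp j g hg⟩
    · rw [Multiset.sum_sum]
      exact sum_le_of_pairwise_disjoint hdisj (fun j => support_sum_subset_genSupport (hp j)) hpu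

end PackingNumber

section ColonPrime

variable {σ ι : Type*}

/-- `IsColonPrime G k u T` says that `(I^k : x^u)` is the ideal generated by the variables in `T`,
where `I` is generated by the monomials `x^g` with `g ∈ G`. Both ideals being monomial, this is
tested on the monomials `x^w` only, so that no coefficient field enters. -/
def IsColonPrime (G : Set (σ →₀ ℕ)) (k : ℕ) (u : σ →₀ ℕ) (T : Set σ) : Prop :=
  ∀ w : σ →₀ ℕ, k ≤ packingNumber G (u + w) ↔ ∃ x ∈ w.support, x ∈ T

namespace IsColonPrime

section

variable {G : Set (σ →₀ ℕ)} {k : ℕ} {u : σ →₀ ℕ} {T : Set σ}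

theorem exists_mem_support_inter (h : IsColonPrime G k u T) (h0 : 0 ∉ G) {g : σ →₀ ℕ}
    (hg : g ∈ G) : ∃ x ∈ g.support, x ∈ T := by
  have hk : k ≤ packingNumber G (u + k • g) :=
    (le_packingNumber_iff h0).2 ⟨k • g, Set.nsmul_mem_nsmul hg, le_add_self⟩
  obtain ⟨x, hx, hxT⟩ := (h _).1 hk
  exact ⟨x, Finsupp.support_smul hx, hxT⟩

theorem le_packingNumber_add_single (h : IsColonPrime G k u T) {x : σ} (hx : x ∈ T) :
    k ≤ packingNumber G (u + Finsupp.single x 1) :=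
  (h _).2 ⟨x, by simp, hx⟩

theorem packingNumber_eq (h : IsColonPrime G (k + 1) u T) (h0 : 0 ∉ G) (hG : G.Nonempty) :
    packingNumber G u = k := by
  have hlt : ¬ k + 1 ≤ packingNumber G u := fun hle => by
    simpa using (h 0).1 (by rwa [add_zero])
  obtain ⟨g, hg⟩ := hG
  obtain ⟨x, -, hx⟩ := h.exists_mem_support_inter h0 hg
  have := (h.le_packingNumber_add_single hx).trans (packingNumber_add_single_le h0 u x)
  omega

end

variable {G : ι → Set (σ →₀ ℕ)}

theorem exists_packingNumber_add_single_eq [Finite ι] {k : ℕ} {u : σ →₀ ℕ} {T : Set σ}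
    (h : IsColonPrime (⋃ j, G j) (k + 1) u T) (h0 : ∀ j, 0 ∉ G j)
    (hdisj : Pairwise fun i j => Disjoint (genSupport (G i)) (genSupport (G j))) {j : ι}
    (hne : (G j).Nonempty) :
    ∃ x, packingNumber (G j) u + 1 ≤ packingNumber (G j) (u + Finsupp.single x 1) := by
  classical
  cases nonempty_fintype ι
  have h0' : 0 ∉ ⋃ j, G j := by simpa using h0
  obtain ⟨g, hg⟩ := hne
  have hgU : g ∈ ⋃ j, G j := Set.mem_iUnion.2 ⟨j, hg⟩
  obtain ⟨x, hxg, hxT⟩ := h.exists_mem_support_inter h0' hgU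
  have hother : ∀ i ∈ Finset.univ.erase j,
      packingNumber (G i) (u + Finsupp.single x 1) = packingNumber (G i) u := by
    intro i hi
    refine packingNumber_congr (h0 i) fun y hy => ?_
    have hxy : x ≠ y := by
      rintro rfl
      exact Set.disjoint_left.1 (hdisj (Finset.ne_of_mem_erase hi)) hy
        (support_subset_genSupport hg hxg)
    simp [hxy]
  have hk := h.packingNumber_eq h0' ⟨g, hgU⟩
  have hle := h.le_packingNumber_add_single hxT
  rw [packingNumber_iUnion h0 hdisj, ← Finset.add_sum_erase _ _ (Finset.mem_univ j)] at hk hle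
  rw [Finset.sum_congr rfl hother] at hle
  exact ⟨x, by omega⟩

theorem mul_add_card_le_degree {a k : ℕ} {u : σ →₀ ℕ} {T : Set σ} [Fintype ι] [Nonempty ι]
    (h : IsColonPrime (⋃ j, G j) (k + 1) u T) (h0 : ∀ j, 0 ∉ G j)
    (hdisj : Pairwise fun i j => Disjoint (genSupport (G i)) (genSupport (G j)))
    (hne : ∀ j, (G j).Nonempty) (ha : ∀ j, ∀ g ∈ G j, a ≤ g.degree) :
    a * (k + Fintype.card ι) ≤ u.degree + Fintype.card ι := by
  classical
  have hblock : ∀ j, a * (packingNumber (G j) u + 1) ≤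
      (genPart (G j) u).degree + 1 := by
    intro j
    obtain ⟨x, hx⟩ := h.exists_packingNumber_add_single_eq h0 hdisj (hne j)
    calc a * (packingNumber (G j) u + 1)
        ≤ a * packingNumber (G j) (u + Finsupp.single x 1) := by gcongr
      _ ≤ (genPart (G j) (u + Finsupp.single x 1)).degree :=
        mul_packingNumber_le_degree_genPart (h0 j) (ha j) _
      _ ≤ (genPart (G j) u).degree + (Finsupp.single x 1).degree := by
        rw [genPart_add, map_add]
        gcongr
        exact Finsupp.degree_mono (genPart_le _ _)
      _ = _ := by rw [Finsupp.degree_single]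
  have hk : ∑ j, packingNumber (G j) u = k := by
    rw [← packingNumber_iUnion h0 hdisj]
    exact h.packingNumber_eq (by simpa using h0)
      (Set.nonempty_iUnion.2 ⟨_, hne (Classical.arbitrary ι)⟩)
  calc a * (k + Fintype.card ι) = ∑ j, a * (packingNumber (G j) u + 1) := by
        simp [← Finset.mul_sum, Finset.sum_add_distrib, hk]
    _ ≤ ∑ j, ((genPart (G j) u).degree + 1) :=
        Finset.sum_le_sum fun j _ => hblock j
    _ = (∑ j, genPart (G j) u).degree + Fintype.card ι := by
        simp [Finset.sum_add_distrib]
    _ ≤ u.degree + Fintype.card ι := by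
        gcongr
        refine Finsupp.degree_mono (sum_le_of_pairwise_disjoint hdisj
          (fun j => support_genPart_subset (G j) u) fun j => genPart_le (G j) u)

theorem iUnion [Fintype ι] {κ : ι → ℕ} {u : ι → σ →₀ ℕ} {T : ι → Set σ}
    (h : ∀ j, IsColonPrime (G j) (κ j + 1) (u j) (T j)) (h0 : ∀ j, 0 ∉ G j)
    (hdisj : Pairwise fun i j => Disjoint (genSupport (G i)) (genSupport (G j)))
    (hne : ∀ j, (G j).Nonempty) :
    IsColonPrime (⋃ j, G j) (∑ j, κ j + 1) (∑ j, genPart (G j) (u j)) (⋃ j, T j) := by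
  intro w
  set v : σ →₀ ℕ := ∑ j, genPart (G j) (u j)
  have hblock : ∀ j, packingNumber (G j) (v + w) = packingNumber (G j) (u j + w) := fun j =>
    packingNumber_congr (h0 j) fun x hx => by
      have hvx : v x = genPart (G j) (u j) x :=
        sum_apply_eq_of_pairwise_disjoint hdisj (fun i => support_genPart_subset (G i) (u i)) hx
      simp [hvx, genPart_apply_of_mem hx]
  have hle : ∀ j, κ j ≤ packingNumber (G j) (u j + w) := fun j =>
    ((h j).packingNumber_eq (h0 j) (hne j)).ge.trans
      (packingNumber_mono (h0 j) le_self_add)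
  have hlt : ∑ j, κ j < ∑ j, packingNumber (G j) (u j + w) ↔
      ∃ j, κ j < packingNumber (G j) (u j + w) :=
    ⟨fun hlt => by simpa using Finset.exists_lt_of_sum_lt hlt, fun ⟨j, hj⟩ =>
      Finset.sum_lt_sum (fun i _ => hle i) ⟨j, Finset.mem_univ j, hj⟩⟩
  rw [packingNumber_iUnion h0 hdisj, Finset.sum_congr rfl fun j _ => hblock j, Nat.succ_le_iff, hlt]
  simp only [← Nat.succ_le_iff, fun j => h j w, Set.mem_iUnion]
  exact ⟨fun ⟨j, x, hx, hj⟩ => ⟨x, hx, j, hj⟩, fun ⟨x, hx, j, hj⟩ => ⟨j, x, hx, hj⟩⟩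

end IsColonPrime

end ColonPrime

section MonomialIdeal

variable {σ : Type}

/-- The monomial ideal generated by the monomials `x^g` with exponent vector `g ∈ G`. -/
def monomialIdeal (K : Type) [Field K] (G : Set (σ →₀ ℕ)) : Ideal (MvPolynomial σ K) :=
  Ideal.span ((fun g => monomial g (1 : K)) '' G)

variable {K : Type} [Field K] {G : Set (σ →₀ ℕ)} {k : ℕ} {P : Ideal (MvPolynomial σ K)}

theorem monomialIdeal_pow (G : Set (σ →₀ ℕ)) (k : ℕ) :
    monomialIdeal K G ^ k = monomialIdeal K (k • G) := by
  induction k with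
  | zero =>
    rw [pow_zero, zero_nsmul, monomialIdeal, ← Set.singleton_zero, Set.image_singleton,
      ← one_def, Ideal.span_singleton_one, Ideal.one_eq_top]
  | succ k ih =>
    rw [pow_succ, succ_nsmul, ih, monomialIdeal, monomialIdeal, monomialIdeal,
      Ideal.span_mul_span']
    congr 1
    exact (Set.image_image2_distrib fun a b => by simp [monomial_mul]).symm

theorem sum_monomialIdeal {ι : Type*} [Fintype ι] (G : ι → Set (σ →₀ ℕ)) :
    ∑ j, monomialIdeal K (G j) = monomialIdeal K (⋃ j, G j) := by
  simp only [monomialIdeal, Set.image_iUnion, Ideal.span_iUnion, Ideal.sum_eq_sup,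
    Finset.sup_univ_eq_iSup]

theorem mem_monomialIdeal_pow_iff (h0 : 0 ∉ G) {f : MvPolynomial σ K} :
    f ∈ monomialIdeal K G ^ k ↔ ∀ u ∈ f.support, k ≤ packingNumber G u := by
  rw [monomialIdeal_pow, monomialIdeal, mem_ideal_span_monomial_image]
  exact forall₂_congr fun u _ => (le_packingNumber_iff h0).symm

theorem mul_monomial_mem_monomialIdeal_pow_iff (h0 : 0 ∉ G) {f : MvPolynomial σ K} {w : σ →₀ ℕ} :
    f * monomial w 1 ∈ monomialIdeal K G ^ k ↔ ∀ u ∈ f.support, k ≤ packingNumber G (u + w) := by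
  have hsupp : (f * monomial w 1).support = f.support.map (addRightEmbedding w) :=
    AddMonoidAlgebra.support_coeff_mul_single f _ (by simp) _
  simp [mem_monomialIdeal_pow_iff h0, hsupp]

theorem monomial_mem_iff_of_isPrime (hP : P.IsPrime) {w : σ →₀ ℕ} :
    monomial w (1 : K) ∈ P ↔ ∃ x ∈ w.support, X x ∈ P := by
  rw [monomial_eq, C_1, one_mul, Finsupp.prod, hP.prod_mem_iff]
  refine exists_congr fun x => and_congr_right fun hx => ?_
  exact hP.pow_mem_iff_mem _ (Nat.pos_of_ne_zero (Finsupp.mem_support_iff.1 hx))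

theorem span_X_image_isPrime (T : Set σ) :
    (Ideal.span (X '' T : Set (MvPolynomial σ K))).IsPrime := by
  classical
  set J := Ideal.span (X '' T : Set (MvPolynomial σ K)) with hJ
  let φ : MvPolynomial σ K →ₐ[K] MvPolynomial σ K := aeval fun i => if i ∈ T then 0 else X i
  have hφ : (Ideal.Quotient.mkₐ K J).comp φ = Ideal.Quotient.mkₐ K J := by
    ext i
    by_cases hi : i ∈ T
    · have : Ideal.Quotient.mk J (X i) = 0 :=
        Ideal.Quotient.eq_zero_iff_mem.2 (Ideal.subset_span ⟨i, hi, rfl⟩)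
      simp [φ, hi, this]
    · simp [φ, hi]
  have hker : J = RingHom.ker φ := by
    apply le_antisymm
    · rw [hJ, Ideal.span_le]
      rintro _ ⟨i, hi, rfl⟩
      simp [φ, hi]
    · intro f hf
      have hquot := DFunLike.congr_fun hφ f
      rw [AlgHom.comp_apply, RingHom.mem_ker.1 hf, map_zero] at hquot
      exact Ideal.Quotient.eq_zero_iff_mem.1 hquot.symm
  rw [hker]
  exact RingHom.ker_isPrime φ

theorem mem_assOf_of_colon_eq {A : Type} [CommRing A] {L P : Ideal A} (hP : P.IsPrime) {f : A}
    (h : L.colon (Ideal.span {f}) = P) : P ∈ assOf L := by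
  have hann : Submodule.colon (⊥ : Submodule A (A ⧸ L)) {Ideal.Quotient.mk L f} = P := by
    ext r
    rw [← h, Ideal.mem_colon_span_singleton, Submodule.mem_colon_singleton, Submodule.mem_bot,
      ← Ideal.Quotient.eq_zero_iff_mem, map_mul]
    rfl
  exact ⟨hP, _, by rw [hann, hP.radical]⟩

theorem IsColonPrime.colon_monomial_eq_span {u : σ →₀ ℕ} {T : Set σ} (h : IsColonPrime G k u T)
    (h0 : 0 ∉ G) :
    (monomialIdeal K G ^ k).colon (Ideal.span {monomial u (1 : K)}) = Ideal.span (X '' T) := by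
  ext f
  rw [Ideal.mem_colon_span_singleton, mul_monomial_mem_monomialIdeal_pow_iff h0,
    mem_ideal_span_X_image]
  refine forall₂_congr fun w _ => ?_
  rw [add_comm, h]
  simp [and_comm]

theorem exists_isColonPrime_of_colon_eq (h0 : 0 ∉ G) (hP : P.IsPrime) {d : ℕ}
    {f : MvPolynomial σ K} (hf : f.IsHomogeneous d)
    (h : (monomialIdeal K G ^ k).colon (Ideal.span {f}) = P) :
    ∃ u, IsColonPrime G k u {x | X x ∈ P} ∧ u.degree = d := by
  have hmem : ∀ w : σ →₀ ℕ, monomial w (1 : K) ∈ P ↔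
      ∀ u ∈ f.support, k ≤ packingNumber G (u + w) := by
    intro w
    rw [← h, Ideal.mem_colon_span_singleton, mul_comm, mul_monomial_mem_monomialIdeal_pow_iff h0]
  -- Otherwise each `u` has a counterexample `w u`; the product of the `x^(w u)` lies in the
  -- prime `P` although no factor does.
  obtain ⟨u, hu, hk⟩ : ∃ u ∈ f.support, ∀ w, k ≤ packingNumber G (u + w) →
      monomial w (1 : K) ∈ P := by
    by_contra! hcon
    choose! w hw hwP using hcon
    have hsum : monomial (∑ u ∈ f.support, w u) (1 : K) ∈ P :=
      (hmem _).2 fun u hu => (hw u hu).trans <| packingNumber_mono h0 <| by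
        gcongr
        exact Finset.single_le_sum_of_canonicallyOrdered hu
    rw [monomial_sum_one, hP.prod_mem_iff] at hsum
    obtain ⟨u, hu, huP⟩ := hsum
    exact hwP u hu huP
  refine ⟨u, fun w => ?_, ?_⟩
  · refine Iff.trans ⟨hk w, fun hw => (hmem w).1 hw u hu⟩ (monomial_mem_iff_of_isPrime hP)
  · rw [Finsupp.degree_eq_weight_one]
    exact hf (mem_support_iff.1 hu)

theorem vnumber_monomialIdeal_pow (h0 : 0 ∉ G) :
    vnumber (monomialIdeal K G ^ k) = sInf {d | ∃ u T, IsColonPrime G k u T ∧ u.degree = d} := by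
  rw [vnumber]
  congr 1
  ext d
  constructor
  · rintro ⟨P, hP, f, hf, hcolon⟩
    obtain ⟨u, hu, hd⟩ := exists_isColonPrime_of_colon_eq h0 hP.isPrime hf hcolon
    exact ⟨u, _, hu, hd⟩
  · rintro ⟨u, T, h, rfl⟩
    have hcolon := h.colon_monomial_eq_span (K := K) h0
    exact ⟨_, mem_assOf_of_colon_eq (span_X_image_isPrime T) hcolon, _,
      isHomogeneous_monomial _ rfl, hcolon⟩

theorem exists_isColonPrime_of_vnumber_pos (h0 : 0 ∉ G)
    (hpos : 0 < vnumber (monomialIdeal K G ^ k)) :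
    ∃ u T, IsColonPrime G k u T ∧ u.degree = vnumber (monomialIdeal K G ^ k) := by
  rw [vnumber_monomialIdeal_pow h0] at hpos ⊢
  exact Nat.sInf_mem (Nat.nonempty_of_pos_sInf hpos)

theorem vnumber_monomialIdeal_iUnion_pow {ι : Type*} [Fintype ι] [Nonempty ι]
    {G : ι → Set (σ →₀ ℕ)} {κ : ι → ℕ} {u : ι → σ →₀ ℕ} {T : ι → Set σ} {a : ℕ}
    (h0 : ∀ j, 0 ∉ G j)
    (hdisj : Pairwise fun i j => Disjoint (genSupport (G i)) (genSupport (G j)))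
    (hne : ∀ j, (G j).Nonempty) (ha : ∀ j, ∀ g ∈ G j, a ≤ g.degree)
    (h : ∀ j, IsColonPrime (G j) (κ j + 1) (u j) (T j))
    (hu : ∀ j, (u j).degree + 1 = a * (κ j + 1)) :
    vnumber (monomialIdeal K (⋃ j, G j) ^ (∑ j, κ j + 1)) + Fintype.card ι =
      a * (∑ j, κ j + Fintype.card ι) := by
  have hglue := IsColonPrime.iUnion h h0 hdisj hne
  rw [vnumber_monomialIdeal_pow (by simpa using h0)]
  apply le_antisymm
  · calc _ ≤ (∑ j, genPart (G j) (u j)).degree + Fintype.card ι := by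
          gcongr
          exact Nat.sInf_le ⟨_, _, hglue, rfl⟩
      _ = ∑ j, ((genPart (G j) (u j)).degree + 1) := by simp [Finset.sum_add_distrib]
      _ ≤ ∑ j, ((u j).degree + 1) := by
          gcongr with j
          exact Finsupp.degree_mono (genPart_le (G j) (u j))
      _ = a * (∑ j, κ j + Fintype.card ι) := by
          simp [hu, ← Finset.mul_sum, Finset.sum_add_distrib]
  · obtain ⟨v, S, hv, hdeg⟩ := Nat.sInf_mem (s := {d | ∃ v S, IsColonPrime (⋃ j, G j)
      (∑ j, κ j + 1) v S ∧ v.degree = d}) ⟨_, _, _, hglue, rfl⟩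
    rw [← hdeg]
    exact hv.mul_add_card_le_degree h0 hdisj hne ha

end MonomialIdeal

section MinimalGenerators

variable {σ K : Type} [Field K] {I : Ideal (MvPolynomial σ K)}

theorem IsMonomialIdeal.eq_monomialIdeal_minimalMonGens (hI : IsMonomialIdeal I) :
    I = monomialIdeal K (minimalMonGens I) := by
  apply le_antisymm
  · obtain ⟨G, hG⟩ := hI
    rw [hG, Ideal.span_le, ← hG]
    rintro _ ⟨g, hg, rfl⟩
    obtain ⟨b, hbg, hb⟩ := exists_minimal_le_of_wellFoundedLT (fun b => monomial b (1 : K) ∈ I) g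
      (hG ▸ Ideal.subset_span ⟨g, hg, rfl⟩)
    have hbmin : b ∈ minimalMonGens I :=
      ⟨hb.prop, fun c hc hcb => le_antisymm hcb (hb.le_of_le hc hcb)⟩
    rw [SetLike.mem_coe, monomialIdeal, mem_ideal_span_monomial_image]
    intro u hu
    rw [Finset.mem_singleton.1 (support_monomial_subset hu)]
    exact ⟨b, hbmin, hbg⟩
  · rw [monomialIdeal, Ideal.span_le]
    rintro _ ⟨u, hu, rfl⟩
    exact hu.1

theorem IsMonomialIdeal.minimalMonGens_nonempty (hI : IsMonomialIdeal I) (hbot : I ≠ ⊥) :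
    (minimalMonGens I).Nonempty := by
  rw [Set.nonempty_iff_ne_empty]
  intro h
  exact hbot (by rw [hI.eq_monomialIdeal_minimalMonGens, h, monomialIdeal, Set.image_empty,
    Ideal.span_empty])

theorem zero_notMem_minimalMonGens (hI : I ≠ ⊤) : 0 ∉ minimalMonGens I :=
  fun h => hI ((Ideal.eq_top_iff_one I).2 h.1)

theorem alphaDeg_le_degree {u : σ →₀ ℕ} (hu : monomial u (1 : K) ∈ I) : alphaDeg I ≤ u.degree :=
  Nat.sInf_le ⟨_, hu, by simp, isHomogeneous_monomial _ rfl⟩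

theorem alphaDeg_pos (hI : I ≠ ⊤) {u : σ →₀ ℕ} (hu : monomial u (1 : K) ∈ I) :
    0 < alphaDeg I := by
  rw [Nat.pos_iff_ne_zero]
  intro hzero
  obtain ⟨f, hfI, hf0, hf⟩ := Nat.sInf_mem (s := {d | ∃ f ∈ I, f ≠ 0 ∧ f.IsHomogeneous d})
    ⟨_, _, hu, by simp, isHomogeneous_monomial _ rfl⟩
  have hconst : f = C (coeff 0 f) :=
    totalDegree_eq_zero_iff_eq_C.1 ((hf.totalDegree hf0).trans hzero)
  have hcoeff : coeff 0 f ≠ 0 := fun h => hf0 (by rw [hconst, h, C_0])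
  exact hI (Ideal.eq_top_of_isUnit_mem _ hfI (hconst ▸ (isUnit_iff_ne_zero.2 hcoeff).map C))

end MinimalGenerators

theorem exists_le_sum_add_one_eq {ι : Type*} [Fintype ι] [Nonempty ι] (N : ι → ℕ) {k : ℕ}
    (hk : ∑ j, N j + 1 ≤ k) : ∃ κ : ι → ℕ, N ≤ κ ∧ ∑ j, κ j + 1 = k := by
  classical
  refine ⟨N + Pi.single (Classical.arbitrary ι) (k - (∑ j, N j + 1)), le_self_add, ?_⟩
  simp only [Pi.add_apply, Finset.sum_add_distrib, Finset.sum_pi_single', Finset.mem_univ, if_true]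
  omega

theorem stmt10_general {σ K : Type} {ι : Type*} [Field K] [Fintype ι] [Nonempty ι]
    (I : ι → Ideal (MvPolynomial σ K))
    (hnz : ∀ j, I j ≠ ⊥) (hpr : ∀ j, I j ≠ ⊤) (hmon : ∀ j, IsMonomialIdeal (I j))
    (hsupp : Pairwise fun i j => Disjoint (suppIdeal (I i)) (suppIdeal (I j)))
    (a : ℕ) (ha : ∀ j, alphaDeg (I j) = a)
    (hv : ∀ j, ∃ kj : ℕ, ∀ k : ℕ, kj ≤ k → vnumber (I j ^ k) = a * k - 1) :
    ∃ k₀ : ℕ, ∀ k : ℕ, k₀ ≤ k → (vnumber ((∑ j, I j) ^ k) : ℤ) =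
      (a : ℤ) * k + (((Fintype.card ι : ℤ) - 1) * a - Fintype.card ι) := by
  set G : ι → Set (σ →₀ ℕ) := fun j => minimalMonGens (I j)
  have hI : ∀ j, I j = monomialIdeal K (G j) := fun j =>
    (hmon j).eq_monomialIdeal_minimalMonGens
  have hne : ∀ j, (G j).Nonempty := fun j => (hmon j).minimalMonGens_nonempty (hnz j)
  have h0 : ∀ j, 0 ∉ G j := fun j => zero_notMem_minimalMonGens (hpr j)
  have hdeg : ∀ j, ∀ g ∈ G j, a ≤ g.degree := fun j g hg => ha j ▸ alphaDeg_le_degree hg.1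
  have hapos : 0 < a := by
    obtain ⟨j⟩ := ‹Nonempty ι›
    exact ha j ▸ alphaDeg_pos (hpr j) (hne j).some_mem.1
  choose N hN using hv
  -- The exponents `κ j + 1 ≥ N j + 2` are at least `2`, so the v-numbers `a * (κ j + 1) - 1` are
  -- positive and cannot be the junk value `sInf ∅ = 0`.
  refine ⟨∑ j, (N j + 1) + 1, fun k hk => ?_⟩
  obtain ⟨κ, hκ, rfl⟩ := exists_le_sum_add_one_eq (fun j => N j + 1) hk
  have hwit : ∀ j, ∃ u T, IsColonPrime (G j) (κ j + 1) u T ∧ u.degree + 1 = a * (κ j + 1) := by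
    intro j
    have hκj : N j + 1 ≤ κ j := hκ j
    have hvj := hN j (κ j + 1) (by omega)
    have htwo : 2 ≤ a * (κ j + 1) := by nlinarith
    rw [hI j] at hvj
    have hpos : 0 < vnumber (monomialIdeal K (G j) ^ (κ j + 1)) := by omega
    obtain ⟨u, T, hu, hd⟩ := exists_isColonPrime_of_vnumber_pos (h0 j) hpos
    exact ⟨u, T, hu, by omega⟩
  choose u T hcolon hu using hwit
  have hvL := vnumber_monomialIdeal_iUnion_pow (K := K) h0 hsupp hne hdeg hcolon hu
  rw [← sum_monomialIdeal, ← Finset.sum_congr rfl fun j _ => hI j] at hvL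
  zify at hvL
  push_cast
  linarith

/-- Theorem 5.2, equal initial degrees: let `I_1,…,I_t` be nonzero proper
monomial ideals with pairwise disjoint supports and equal initial degrees
`α(I_1) = ⋯ = α(I_t) = a`, such that `v(I_j^k) = a·k − 1` for all `k ≫ 0`.  Then for all
`k ≫ 0`, `v((I_1+⋯+I_t)^k) = a·k + ((t−1)·a − t)`. -/
theorem stmt10 {K : Type} [Field K] {n t : ℕ} (ht : 0 < t)
    (I : Fin t → Ideal (MvPolynomial (Fin n) K))
    (hnz : ∀ j, I j ≠ ⊥) (hpr : ∀ j, I j ≠ ⊤) (hmon : ∀ j, IsMonomialIdeal (I j))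
    (hsupp : Pairwise fun i j => Disjoint (suppIdeal (I i)) (suppIdeal (I j)))
    (a : ℕ) (ha : ∀ j, alphaDeg (I j) = a)
    (hv : ∀ j, ∃ kj : ℕ, ∀ k : ℕ, kj ≤ k → vnumber (I j ^ k) = a * k - 1) :
    ∃ k₀ : ℕ, ∀ k : ℕ, k₀ ≤ k →
      (vnumber ((∑ j, I j) ^ k) : ℤ) = (a : ℤ) * k + (((t : ℤ) - 1) * a - t) := by
  have : Nonempty (Fin t) := ⟨⟨0, ht⟩⟩
  simpa using stmt10_general I hnz hpr hmon hsupp a ha hv
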